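/- arXiv:0907.1116 — 2 statements merged into one kernel-verified Lean document; each statement's English description precedes it below -/
import Mathlib

section
/- Let q ≥ 2 be an integer, 0 < H < 1 − 1/(2q), and let c_{1,q,H} > 0 be the constant for which V_n/(c_{1,q,H} √n) converges in law to N(0,1). Then ε² · Σ_{n≥1} P(|V_n| > ε n) converges to c_{1,q,H}² as ε → 0⁺ (Hsu–Robbins theorem for the variations of fractional Brownian motion, central-limit regime). -/
/-!
Put `W n = V n ^ 2 / n` and `δ = ε ^ 2`. Since `ε n < |V n|` iff `δ n < W n`, the quantity
`ε ^ 2 * ∑ n, P (ε n < |V n|)` is the integral over `x > 0` of `P (δ N < W N)` with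
`N = ⌊x / δ⌋ + 1`, a Riemann-type sum of the tails of `W`. As `δ → 0` the index `N` tends to
infinity and `δ N` to `x`, so the central limit theorem makes the integrand converge to
`P (x < (c Z) ^ 2)` with `Z` standard Gaussian, and the layer-cake formula evaluates the integral
of the limit as `E[(c Z) ^ 2] = c ^ 2`.

Dominated convergence only needs tails of order `x⁻²`, hence `E[V n ^ 4] = O(n ^ 2)`. By Gaussian
integration by parts, `E[∏ i, H_q (X i)]` for four standard Gaussian variables is at most a constant
times the value of one Feynman diagram without self-contractions. In a diagram on four vertices of
degree `q`, opposite pairs of vertices are joined by equally many edges, so its value is at most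
`|ρ₀₁ ρ₂₃| ^ q + |ρ₀₂ ρ₁₃| ^ q + |ρ₀₃ ρ₁₂| ^ q`. Summing over the increments gives
`E[V n ^ 4] = O((∑ k l, |ρ (k - l)| ^ q) ^ 2)`, and `ρ r = O(|r| ^ (2 H - 2))` makes `|ρ| ^ q`
summable when `H < 1 - 1 / (2 q)`.
-/

open MeasureTheory ProbabilityTheory Filter Real Topology

/-- A (centered) fractional Brownian motion with Hurst parameter `H`:
all finite-dimensional distributions are centered Gaussian (equivalently, every finite
linear combination of values of the process is a centered real Gaussian), with covariance
`E (B s * B t) = (s^(2H) + t^(2H) - |t-s|^(2H)) / 2` for nonnegative times. -/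
structure IsFractionalBrownianMotion {Ω : Type*} [MeasureSpace Ω]
    (B : ℝ → Ω → ℝ) (H : ℝ) : Prop where
  measurable : ∀ t : ℝ, Measurable (B t)
  gaussian_fdd : ∀ (n : ℕ) (t : Fin n → ℝ), (∀ i, 0 ≤ t i) → ∀ c : Fin n → ℝ,
    ∃ v : NNReal,
      Measure.map (fun ω => ∑ i, c i * B (t i) ω) (ℙ : Measure Ω) = gaussianReal 0 v
  covariance : ∀ s t : ℝ, 0 ≤ s → 0 ≤ t →
    ∫ ω, B s ω * B t ω ∂(ℙ : Measure Ω)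
      = (s ^ (2 * H) + t ^ (2 * H) - |t - s| ^ (2 * H)) / 2

/-- `V_n = ∑_{k=0}^{n-1} H_q (n^H (B_{(k+1)/n} - B_{k/n}))`, where `H_q` is the Hermite
polynomial of degree `q`. -/
noncomputable def hermiteVariation {Ω : Type*} [MeasureSpace Ω]
    (B : ℝ → Ω → ℝ) (H : ℝ) (q n : ℕ) (ω : Ω) : ℝ :=
  ∑ k ∈ Finset.range n,
    Polynomial.aeval
      ((n : ℝ) ^ H * (B (((k : ℝ) + 1) / n) ω - B ((k : ℝ) / n) ω))
      (Polynomial.hermite q)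

/-- Convergence in distribution of a sequence of real random variables to a law `μ`. -/
def TendstoInDistribution {Ω : Type*} [MeasureSpace Ω]
    (Z : ℕ → Ω → ℝ) (μ : Measure ℝ) : Prop :=
  ∀ f : BoundedContinuousFunction ℝ ℝ,
    Tendsto (fun n => ∫ ω, f (Z n ω) ∂(ℙ : Measure Ω)) atTop (𝓝 (∫ x, f x ∂μ))

section Stein

open Polynomial

lemma hasDerivAt_gaussianPDFReal (m : ℝ) (v : NNReal) (x : ℝ) :
    HasDerivAt (gaussianPDFReal m v) (-((x - m) / v) * gaussianPDFReal m v x) x := by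
  have hexponent : HasDerivAt (fun y => -(y - m) ^ 2 / (2 * v)) (-((x - m) / v)) x := by
    refine ((((hasDerivAt_id x).sub_const m).pow 2).neg.div_const (2 * (v : ℝ))).congr_deriv ?_
    rw [neg_div, ← mul_div_mul_left (x - m) _ (two_ne_zero (α := ℝ))]
    simp
  refine (hexponent.exp.const_mul (√(2 * π * v))⁻¹).congr_deriv ?_
  rw [gaussianPDFReal_def]
  ring

lemma integrable_eval_gaussianReal (P : ℝ[X]) (m : ℝ) (v : NNReal) :
    Integrable (fun x => P.eval x) (gaussianReal m v) := by
  simp only [eval_eq_sum_range]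
  refine integrable_finsetSum _ fun k _ => Integrable.const_mul ?_ _
  rcases eq_or_ne k 0 with rfl | hk
  · simp
  · have hmoment := (memLp_id_gaussianReal' (μ := m) (v := v) k (by simp)).integrable_norm_pow hk
    refine hmoment.mono' (by fun_prop) (ae_of_all _ fun x => ?_)
    simp

lemma integral_mul_eval_gaussianReal (P : ℝ[X]) (v : NNReal) :
    ∫ x, x * P.eval x ∂gaussianReal 0 v = v * ∫ x, (derivative P).eval x ∂gaussianReal 0 v := by
  rcases eq_or_ne v 0 with rfl | hv
  · simp
  have hint (Q : ℝ[X]) : Integrable fun x => gaussianPDFReal 0 v x * Q.eval x := by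
    have h := integrable_eval_gaussianReal Q 0 v
    rw [gaussianReal_of_var_ne_zero _ hv,
      integrable_withDensity_iff_integrable_smul' (measurable_gaussianPDF _ _)
        (ae_of_all _ fun _ => gaussianPDF_lt_top)] at h
    simpa [toReal_gaussianPDF] using h
  have hv' : (v : ℝ) ≠ 0 := by exact_mod_cast hv
  have hderiv (x : ℝ) : HasDerivAt (fun y => v * (gaussianPDFReal 0 v y * P.eval y))
      (v * (gaussianPDFReal 0 v x * (derivative P).eval x)
        - gaussianPDFReal 0 v x * (X * P).eval x) x := by
    refine (((hasDerivAt_gaussianPDFReal 0 v x).mul (P.hasDerivAt x)).const_mul _).congr_deriv ?_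
    rw [eval_mul, eval_X]
    field_simp
    ring
  have hboundary := integral_eq_zero_of_hasDerivAt_of_integrable hderiv
    (((hint _).const_mul _).sub (hint _)) ((hint _).const_mul _)
  rw [integral_sub ((hint _).const_mul _) (hint _), integral_const_mul, sub_eq_zero] at hboundary
  simp only [integral_gaussianReal_eq_integral_smul hv, smul_eq_mul, hboundary, eval_mul, eval_X]

end Stein

section CurveSubstitution

open Polynomial

variable {R ι : Type*} [CommSemiring R]

lemma derivative_mvPolynomial_aeval [Fintype ι] (f : ι → R[X]) (P : MvPolynomial ι R) :
    derivative (MvPolynomial.aeval f P)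
      = ∑ j, derivative (f j) * MvPolynomial.aeval f (MvPolynomial.pderiv j P) := by
  classical
  induction P using MvPolynomial.induction_on with
  | C a => simp
  | add P Q hP hQ => simp only [map_add, hP, hQ, mul_add, Finset.sum_add_distrib]
  | mul_X P i hP =>
    have hleibniz (j : ι) :
        derivative (f j) * MvPolynomial.aeval f (MvPolynomial.pderiv j (P * MvPolynomial.X i))
          = (if j = i then MvPolynomial.aeval f P * derivative (f j) else 0)
            + derivative (f j) * MvPolynomial.aeval f (MvPolynomial.pderiv j P) * f i := by
      rw [Derivation.leibniz]
      rcases eq_or_ne j i with rfl | hj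
      · simp only [MvPolynomial.pderiv_X_self, if_true, smul_eq_mul, mul_one, map_add, map_mul,
          MvPolynomial.aeval_X]
        ring
      · simp only [MvPolynomial.pderiv_X_of_ne hj.symm, hj, if_false, smul_eq_mul, mul_zero,
          zero_add, map_mul, MvPolynomial.aeval_X]
        ring
    simp_rw [hleibniz]
    rw [map_mul, MvPolynomial.aeval_X, derivative_mul, hP, Finset.sum_mul, Finset.sum_add_distrib,
      Finset.sum_ite_eq' Finset.univ i, if_pos (Finset.mem_univ i), add_comm]

lemma eval_mvPolynomial_aeval (f : ι → R[X]) (P : MvPolynomial ι R) (x : R) :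
    (MvPolynomial.aeval f P).eval x = MvPolynomial.eval (fun j => (f j).eval x) P := by
  induction P using MvPolynomial.induction_on with
  | C a => simp
  | add P Q hP hQ => simp [hP, hQ]
  | mul_X P i hP => simp [hP]

lemma integral_mul_mvPolynomial_eval_line [Fintype ι] (v : NNReal) (y r : ι → ℝ)
    (P : MvPolynomial ι ℝ) :
    ∫ u, u * MvPolynomial.eval (fun j => y j + r j * u) P ∂gaussianReal 0 v
      = ∫ u, ∑ j, v * r j * MvPolynomial.eval (fun j => y j + r j * u) (MvPolynomial.pderiv j P)
          ∂gaussianReal 0 v := by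
  have hline (Q : MvPolynomial ι ℝ) (u : ℝ) :
      MvPolynomial.eval (fun j => y j + r j * u) Q
        = (MvPolynomial.aeval (fun j => C (y j) + C (r j) * X) Q).eval u := by
    simp [eval_mvPolynomial_aeval]
  simp_rw [hline]
  rw [integral_mul_eval_gaussianReal, ← integral_const_mul]
  simp [derivative_mvPolynomial_aeval, eval_finsetSum, Finset.mul_sum, mul_assoc]

end CurveSubstitution

section GaussianIBP

variable {ι Ω : Type*} {mΩ : MeasurableSpace Ω} {μ : Measure Ω} {X : ι → Ω → ℝ}

lemma memLp_mvPolynomial_eval [IsFiniteMeasure μ]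
    (hX : ∀ i, ∀ p : ENNReal, p ≠ ⊤ → MemLp (X i) p μ)
    (P : MvPolynomial ι ℝ) {p : ENNReal} (hp : p ≠ ⊤) :
    MemLp (fun ω => MvPolynomial.eval (X · ω) P) p μ := by
  induction P using MvPolynomial.induction_on generalizing p with
  | C a => simpa using memLp_const a
  | add P Q hP hQ => simpa only [map_add] using! (hP hp).add (hQ hp)
  | mul_X P i hP =>
    have hp2 : p * 2 ≠ ⊤ := ENNReal.mul_ne_top hp ENNReal.ofNat_ne_top
    have : ENNReal.HolderTriple (p * 2) (p * 2) p := ⟨by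
      rw [ENNReal.mul_inv (by simp) (by simp), ← mul_add, ENNReal.inv_two_add_inv_two, mul_one]⟩
    simpa only [map_mul, MvPolynomial.eval_X] using! (hX i _ hp2).mul (hP hp2)

lemma memLp_mvPolynomial_eval_of_isGaussianProcess (hX : IsGaussianProcess X μ)
    (P : MvPolynomial ι ℝ) {p : ENNReal} (hp : p ≠ ⊤) :
    MemLp (fun ω => MvPolynomial.eval (X · ω) P) p μ :=
  have := hX.isProbabilityMeasure
  memLp_mvPolynomial_eval (fun i _ hp => (hX.hasGaussianLaw_eval i).memLp hp) P hp

lemma integrable_mvPolynomial_eval_of_isGaussianProcess (hX : IsGaussianProcess X μ)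
    (P : MvPolynomial ι ℝ) : Integrable (fun ω => MvPolynomial.eval (X · ω) P) μ :=
  memLp_one_iff_integrable.1 <|
    memLp_mvPolynomial_eval_of_isGaussianProcess hX P ENNReal.one_ne_top

lemma integral_comp_eq_integral_integral_of_indepFun {α β : Type*} [MeasurableSpace α]
    [MeasurableSpace β] [IsFiniteMeasure μ] {U : Ω → α} {V : Ω → β} (hUV : IndepFun U V μ)
    (hU : AEMeasurable U μ) (hV : AEMeasurable V μ) {f : α × β → ℝ} (hf : Measurable f)
    (hint : Integrable (fun ω => f (U ω, V ω)) μ) :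
    ∫ ω, f (U ω, V ω) ∂μ = ∫ ω, ∫ u, f (u, V ω) ∂μ.map U ∂μ := by
  have hmap := (indepFun_iff_map_prod_eq_prod_map_map hU hV).1 hUV
  have hint' : Integrable f ((μ.map U).prod (μ.map V)) := by
    rw [← hmap]
    exact (integrable_map_measure hf.aestronglyMeasurable (hU.prodMk hV)).2 hint
  rw [← integral_map (hU.prodMk hV) hf.aestronglyMeasurable, hmap, integral_prod_symm _ hint',
    integral_map hV hf.stronglyMeasurable.integral_prod_left'.aestronglyMeasurable]

lemma variance_mul_covariance_div_variance [IsProbabilityMeasure μ] {U V : Ω → ℝ}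
    (hU : MemLp U 2 μ) : Var[U; μ] * (cov[U, V; μ] / Var[U; μ]) = cov[U, V; μ] := by
  refine mul_div_cancel_of_imp' fun hvar => ?_
  refine integral_eq_zero_of_ae ?_
  filter_upwards [ae_eq_integral_of_variance_eq_zero hU hvar] with ω hω
  simp [hω]

lemma indepFun_sub_regression (hX : IsGaussianProcess X μ) (i : ι) :
    IndepFun (X i) (fun ω j => X j ω - cov[X i, X j; μ] / Var[X i; μ] * X i ω) μ := by
  have := hX.isProbabilityMeasure
  have hL2 (j : ι) : MemLp (X j) 2 μ := (hX.hasGaussianLaw_eval j).memLp_two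
  classical
  have hjoint : IsGaussianProcess (Sum.elim (fun _ : Unit => X i)
      (fun j ω => X j ω - cov[X i, X j; μ] / Var[X i; μ] * X i ω)) μ := by
    refine hX.of_isGaussianProcess ?_
    rintro (_ | j)
    · exact ⟨{i}, .proj ⟨i, by simp⟩, fun ω => rfl⟩
    · exact ⟨{i, j}, .proj ⟨j, by simp⟩
        - (cov[X i, X j; μ] / Var[X i; μ]) • .proj ⟨i, by simp⟩, fun ω => rfl⟩
  have hindep := hjoint.indepFun_of_covariance_eq_zero (fun _ => hX.aemeasurable i)
    (fun j => (hX.aemeasurable j).sub ((hX.aemeasurable i).const_mul _)) fun _ j => by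
      rw [covariance_fun_sub_right (hL2 i) (hL2 j) ((hL2 i).const_mul _),
        covariance_const_mul_right, covariance_self (hX.aemeasurable i), mul_comm,
        variance_mul_covariance_div_variance (hL2 i), sub_self]
  exact hindep.comp (measurable_pi_apply ()) measurable_id

theorem integral_mul_mvPolynomial_eval_of_isGaussianProcess [Fintype ι]
    (hX : IsGaussianProcess X μ) {i : ι} (hi : μ[X i] = 0) (P : MvPolynomial ι ℝ) :
    ∫ ω, X i ω * MvPolynomial.eval (X · ω) P ∂μ
      = ∑ j, cov[X i, X j; μ] * ∫ ω, MvPolynomial.eval (X · ω) (MvPolynomial.pderiv j P) ∂μ := by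
  have := hX.isProbabilityMeasure
  set v : NNReal := Var[X i; μ].toNNReal with hv
  set r : ι → ℝ := fun j => cov[X i, X j; μ] / Var[X i; μ]
  set Y : Ω → ι → ℝ := fun ω j => X j ω - r j * X i ω with hY
  have hindep : IndepFun (X i) Y μ := indepFun_sub_regression hX i
  have hYm : AEMeasurable Y μ := aemeasurable_pi_lambda _ fun j =>
    (hX.aemeasurable j).sub ((hX.aemeasurable i).const_mul _)
  have hlaw : μ.map (X i) = gaussianReal 0 v := by
    rw [(hX.hasGaussianLaw_eval i).map_eq_gaussianReal, hi]
  have hXY (ω : Ω) : (fun j => Y ω j + r j * X i ω) = (X · ω) := by simp [hY]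
  have hvr (j : ι) : v * r j = cov[X i, X j; μ] := by
    rw [hv, Real.coe_toNNReal _ (variance_nonneg _ _)]
    exact variance_mul_covariance_div_variance (hX.hasGaussianLaw_eval i).memLp_two
  have hmeas (Q : MvPolynomial ι ℝ) :
      Measurable fun z : ℝ × (ι → ℝ) => MvPolynomial.eval (fun j => z.2 j + r j * z.1) Q :=
    (MvPolynomial.continuous_eval Q).measurable.comp (by fun_prop)
  have hint (Q : MvPolynomial ι ℝ) := integrable_mvPolynomial_eval_of_isGaussianProcess hX Q
  have hintP := hint (MvPolynomial.X i * P)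
  simp only [map_mul, MvPolynomial.eval_X] at hintP
  have hleft := integral_comp_eq_integral_integral_of_indepFun hindep (hX.aemeasurable i) hYm
    (f := fun z => z.1 * MvPolynomial.eval (fun j => z.2 j + r j * z.1) P)
    (measurable_fst.mul (hmeas P))
    (by simpa only [hXY] using hintP)
  have hright := integral_comp_eq_integral_integral_of_indepFun hindep (hX.aemeasurable i) hYm
    (f := fun z => ∑ j, v * r j *
      MvPolynomial.eval (fun j => z.2 j + r j * z.1) (MvPolynomial.pderiv j P))
    (Finset.measurable_sum _ fun j _ => (hmeas _).const_mul _)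
    (by simpa only [hXY] using integrable_finsetSum _ fun j _ => (hint _).const_mul _)
  simp only [hXY, hlaw, hvr] at hleft hright
  simp_rw [hleft, integral_mul_mvPolynomial_eval_line, hvr, ← hright]
  rw [integral_finsetSum _ fun j _ => (hint _).const_mul _]
  simp_rw [integral_const_mul]

end GaussianIBP

section HermiteProducts

open Polynomial

variable {ι : Type*} [Fintype ι]

lemma derivative_hermite (n : ℕ) : derivative (hermite n) = n * hermite (n - 1) := by
  induction n with
  | zero => simp
  | succ n ih =>
    rcases n with _ | n
    · simp
    · simp only [Nat.add_sub_cancel] at ih ⊢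
      rw [hermite_succ (n + 1), ih, derivative_sub, derivative_mul, derivative_mul, ih,
        derivative_X, derivative_natCast, hermite_succ n]
      push_cast
      ring

lemma hermite_succ_eq_X_mul_sub (n : ℕ) :
    hermite (n + 1) = X * hermite n - (n : ℤ[X]) * hermite (n - 1) := by
  rw [hermite_succ, derivative_hermite]

/-- The tensor product `∏ i, H_{α i} (x i)` of Hermite polynomials, as a polynomial in the
variables `x i`. -/
noncomputable def hermiteProd (α : ι → ℕ) : MvPolynomial ι ℝ :=
  ∏ i, aeval (MvPolynomial.X i) (hermite (α i))

lemma hermiteProd_zero : hermiteProd (0 : ι → ℕ) = 1 := by simp [hermiteProd]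

lemma eval_hermiteProd (α : ι → ℕ) (x : ι → ℝ) :
    MvPolynomial.eval x (hermiteProd α) = ∏ i, aeval (x i) (hermite (α i)) := by
  rw [hermiteProd, map_prod]
  refine Finset.prod_congr rfl fun i _ => ?_
  rw [aeval_def, hom_eval₂, MvPolynomial.eval_X, aeval_def]
  congr 1
  exact RingHom.ext_int _ _

variable [DecidableEq ι]

lemma hermiteProd_eq_mul_prod_erase {α β : ι → ℕ} (i : ι) (h : ∀ j ≠ i, β j = α j) :
    hermiteProd β = aeval (MvPolynomial.X i) (hermite (β i))
      * ∏ j ∈ Finset.univ.erase i, aeval (MvPolynomial.X j) (hermite (α j)) := by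
  rw [hermiteProd, ← Finset.mul_prod_erase _ _ (Finset.mem_univ i)]
  congr 1
  exact Finset.prod_congr rfl fun j hj => by rw [h j (Finset.ne_of_mem_erase hj)]

lemma hermiteProd_add_single (α : ι → ℕ) (i : ι) :
    hermiteProd (α + Pi.single i 1)
      = MvPolynomial.X i * hermiteProd α
        - (α i : MvPolynomial ι ℝ) * hermiteProd (α - Pi.single i 1) := by
  rw [hermiteProd_eq_mul_prod_erase i (α := α) (by simp +contextual),
    hermiteProd_eq_mul_prod_erase (α := α) (β := α) i (by simp),
    hermiteProd_eq_mul_prod_erase i (α := α) (by simp +contextual),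
    Pi.add_apply, Pi.sub_apply, Pi.single_eq_same, hermite_succ_eq_X_mul_sub]
  simp only [map_sub, map_mul, aeval_X, map_natCast]
  ring

lemma pderiv_hermiteProd (α : ι → ℕ) (i : ι) :
    MvPolynomial.pderiv i (hermiteProd α)
      = (α i : MvPolynomial ι ℝ) * hermiteProd (α - Pi.single i 1) := by
  have hother : MvPolynomial.pderiv i (∏ j ∈ Finset.univ.erase i,
      (aeval (MvPolynomial.X j) (hermite (α j)) : MvPolynomial ι ℝ)) = 0 := by
    refine Finset.prod_induction _ (fun P => MvPolynomial.pderiv i P = 0) (fun P Q hP hQ => ?_)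
      (by simp) fun j hj => ?_
    · simp only [Derivation.leibniz, hP, hQ, smul_zero, add_zero]
    · rw [← aeval_map_algebraMap ℝ, Derivation.map_aeval,
        MvPolynomial.pderiv_X_of_ne (Finset.ne_of_mem_erase hj), smul_zero]
  rw [hermiteProd_eq_mul_prod_erase (α := α) (β := α) i (by simp),
    hermiteProd_eq_mul_prod_erase i (α := α) (by simp +contextual),
    Derivation.leibniz, hother, ← aeval_map_algebraMap ℝ, Derivation.map_aeval,
    MvPolynomial.pderiv_X_self, derivative_map, derivative_hermite, Polynomial.map_mul,
    Polynomial.map_natCast]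
  simp only [Pi.sub_apply, Pi.single_eq_same, map_mul, map_natCast, smul_eq_mul,
    aeval_map_algebraMap]
  ring

end HermiteProducts

section Diagrams

variable {ι : Type*} [Fintype ι]

/-- `m` encodes a Feynman diagram without self-contractions in which vertex `i` has `α i` legs:
`m i j` edges are drawn from `i` to `j`, the orientation of the edges being immaterial. -/
structure IsDiagram (m : ι → ι → ℕ) (α : ι → ℕ) : Prop where
  loopless : ∀ i, m i i = 0
  degree_eq : ∀ i, ∑ j, (m i j + m j i) = α i

/-- The value of the Feynman diagram `m` with propagator `C`: the product over all edges of the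
absolute value of the propagator. -/
def diagramValue (C : ι → ι → ℝ) (m : ι → ι → ℕ) : ℝ := ∏ i, ∏ j, |C i j| ^ m i j

lemma diagramValue_nonneg (C : ι → ι → ℝ) (m : ι → ι → ℕ) : 0 ≤ diagramValue C m :=
  Finset.prod_nonneg fun _ _ => Finset.prod_nonneg fun _ _ => by positivity

variable [DecidableEq ι]

lemma IsDiagram.add_edge {m : ι → ι → ℕ} {α : ι → ℕ} (hm : IsDiagram m α) {i j : ι} (hij : i ≠ j) :
    IsDiagram (m + Pi.single i (Pi.single j 1)) (α + Pi.single i 1 + Pi.single j 1) where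
  loopless k := by
    rcases eq_or_ne k i with rfl | hk
    · simp [hm.loopless, hij]
    · simp [hm.loopless, hk]
  degree_eq k := by
    have hout : ∑ l, (Pi.single i (Pi.single j 1) : ι → ι → ℕ) k l = (Pi.single i 1 : ι → ℕ) k := by
      rcases eq_or_ne k i with rfl | hk <;> simp [*]
    have hin : ∑ l, (Pi.single i (Pi.single j 1) : ι → ι → ℕ) l k = (Pi.single j 1 : ι → ℕ) k := by
      rw [Finset.sum_eq_single i (fun l _ hl => by simp [hl]) (by simp), Pi.single_eq_same]
    have h := hm.degree_eq k
    simp only [Pi.add_apply, Finset.sum_add_distrib, hin, hout, ← h]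
    ring

lemma diagramValue_add_edge (C : ι → ι → ℝ) (m : ι → ι → ℕ) (i j : ι) :
    diagramValue C (m + Pi.single i (Pi.single j 1)) = diagramValue C m * |C i j| := by
  have hedge : ∏ k, ∏ l, |C k l| ^ (Pi.single i (Pi.single j 1) : ι → ι → ℕ) k l = |C i j| := by
    rw [Finset.prod_eq_single i (fun k _ hk => by simp [hk]) (by simp), Pi.single_eq_same,
      Finset.prod_eq_single j (fun l _ hl => by simp [hl]) (by simp), Pi.single_eq_same, pow_one]
  simp only [diagramValue, Pi.add_apply, pow_add, Finset.prod_mul_distrib, hedge]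

end Diagrams

section DiagramBound

variable {ι Ω : Type*} {mΩ : MeasurableSpace Ω} {μ : Measure Ω} {X : ι → Ω → ℝ}

lemma exists_abs_sum_mul_le {s : Finset ι} {w : ι → ℕ} {a : ι → ℝ}
    (h : ∑ j ∈ s, w j * a j ≠ 0) :
    ∃ j ∈ s, w j ≠ 0 ∧ a j ≠ 0 ∧ |∑ j ∈ s, w j * a j| ≤ (∑ j ∈ s, w j : ℕ) * |a j| := by
  classical
  obtain ⟨i, hi, hwi⟩ := Finset.exists_ne_zero_of_sum_ne_zero h
  obtain ⟨j, hj, hmax⟩ := Finset.exists_max_image (s.filter (w · ≠ 0)) (|a ·|)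
    ⟨i, Finset.mem_filter.2 ⟨hi, by exact_mod_cast left_ne_zero_of_mul hwi⟩⟩
  rw [Finset.mem_filter] at hj
  have hbound (k : ι) (hk : k ∈ s) : |w k * a k| ≤ w k * |a j| := by
    rw [abs_mul, Nat.abs_cast]
    rcases eq_or_ne (w k) 0 with hw | hw
    · simp [hw]
    · exact mul_le_mul_of_nonneg_left (hmax k (Finset.mem_filter.2 ⟨hk, hw⟩)) (Nat.cast_nonneg _)
  refine ⟨j, hj.1, hj.2, fun h0 => h ?_, ?_⟩
  · refine Finset.sum_eq_zero fun k hk => abs_eq_zero.1 (le_antisymm ?_ (abs_nonneg _))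
    simpa [h0] using hbound k hk
  · rw [Nat.cast_sum, Finset.sum_mul]
    exact (Finset.abs_sum_le_sum_abs _ _).trans (Finset.sum_le_sum hbound)

lemma exists_eq_add_single [DecidableEq ι] {α : ι → ℕ} {i : ι} (h : α i ≠ 0) :
    ∃ β : ι → ℕ, α = β + Pi.single i 1 := by
  refine ⟨α - Pi.single i 1, (tsub_add_cancel_of_le fun j => ?_).symm⟩
  rcases eq_or_ne j i with rfl | hj
  · simpa using Nat.one_le_iff_ne_zero.2 h
  · simp [hj]

variable [Fintype ι]

lemma integral_hermiteProd_add_single [DecidableEq ι] (hX : IsGaussianProcess X μ) {i : ι}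
    (hmean : μ[X i] = 0) (hvar : Var[X i; μ] = 1) (α : ι → ℕ) :
    ∫ ω, MvPolynomial.eval (X · ω) (hermiteProd (α + Pi.single i 1)) ∂μ
      = ∑ j ∈ Finset.univ.erase i, α j * (cov[X i, X j; μ]
          * ∫ ω, MvPolynomial.eval (X · ω) (hermiteProd (α - Pi.single j 1)) ∂μ) := by
  have hint (P : MvPolynomial ι ℝ) := integrable_mvPolynomial_eval_of_isGaussianProcess hX P
  have hmul := hint (MvPolynomial.X i * hermiteProd α)
  simp only [map_mul, MvPolynomial.eval_X] at hmul
  simp only [hermiteProd_add_single, map_sub, map_mul, MvPolynomial.eval_X, map_natCast]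
  rw [integral_sub hmul ((hint _).const_mul _),
    integral_mul_mvPolynomial_eval_of_isGaussianProcess hX hmean, integral_const_mul,
    ← Finset.add_sum_erase _ _ (Finset.mem_univ i), covariance_self (hX.aemeasurable i), hvar]
  simp only [pderiv_hermiteProd, map_mul, map_natCast, integral_const_mul]
  rw [one_mul, add_sub_cancel_left]
  exact Finset.sum_congr rfl fun j _ => mul_left_comm _ _ _

theorem exists_isDiagram_abs_integral_hermiteProd_le (hX : IsGaussianProcess X μ)
    (hmean : ∀ i, μ[X i] = 0) (hvar : ∀ i, Var[X i; μ] = 1) (α : ι → ℕ)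
    (hα : ∫ ω, MvPolynomial.eval (X · ω) (hermiteProd α) ∂μ ≠ 0) :
    ∃ m, IsDiagram m α ∧ |∫ ω, MvPolynomial.eval (X · ω) (hermiteProd α) ∂μ|
      ≤ (∑ i, α i).factorial * diagramValue (fun i j => cov[X i, X j; μ]) m := by
  classical
  induction hn : ∑ i, α i using Nat.strong_induction_on generalizing α with
  | _ n ih =>
    rcases eq_or_ne α 0 with rfl | hα0
    · have := hX.isProbabilityMeasure
      obtain rfl : n = 0 := by simpa using hn.symm
      exact ⟨0, ⟨by simp, by simp⟩, by simp [diagramValue, hermiteProd_zero]⟩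
    obtain ⟨i, hi⟩ : ∃ i, α i ≠ 0 := by simpa [funext_iff] using hα0
    obtain ⟨β, rfl⟩ := exists_eq_add_single hi
    rw [integral_hermiteProd_add_single hX (hmean i) (hvar i)] at hα ⊢
    -- Only the largest contraction of a leg at `i` is kept, so a single diagram survives.
    obtain ⟨j, hj, hβj, hne, hle⟩ := exists_abs_sum_mul_le hα
    obtain ⟨γ, rfl⟩ := exists_eq_add_single hβj
    rw [add_tsub_cancel_right] at hne hle
    have hdegree : ∑ k, γ k + 2 = n := by simp [← hn, Finset.sum_add_distrib, add_assoc]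
    obtain ⟨m, hm, hle_m⟩ := ih (∑ k, γ k) (by lia) γ (right_ne_zero_of_mul hne) rfl
    refine ⟨m + Pi.single j (Pi.single i 1), hm.add_edge (Finset.ne_of_mem_erase hj), ?_⟩
    have hweight : (∑ k ∈ Finset.univ.erase i, (γ + Pi.single j 1 : ι → ℕ) k) ≤ n := by
      rw [← hn]
      refine (Finset.sum_le_sum_of_subset (Finset.erase_subset _ _)).trans ?_
      exact Finset.sum_le_sum fun k _ => Nat.le_add_right _ _
    have hfactorial : n * (∑ k, γ k).factorial ≤ n.factorial := by
      rw [← hdegree, Nat.factorial_succ]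
      exact Nat.mul_le_mul_left _ (Nat.factorial_le (Nat.le_succ _))
    refine hle.trans ?_
    rw [diagramValue_add_edge, covariance_comm (X j), abs_mul]
    calc _ ≤ (n : ℝ) * (|cov[X i, X j; μ]| * ((∑ k, γ k).factorial
            * diagramValue (fun i j => cov[X i, X j; μ]) m)) := by gcongr
      _ = (n * (∑ k, γ k).factorial : ℕ) * (diagramValue (fun i j => cov[X i, X j; μ]) m
            * |cov[X i, X j; μ]|) := by push_cast; ring
      _ ≤ _ := by
        gcongr
        exact mul_nonneg (diagramValue_nonneg _ _) (abs_nonneg _)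

end DiagramBound

section FourVertices

lemma prod_pow_le_sum_pow_sum {ι : Type*} {s : Finset ι} (hs : s.Nonempty) {x : ι → ℝ}
    (hx : ∀ i ∈ s, 0 ≤ x i) (k : ι → ℕ) :
    ∏ i ∈ s, x i ^ k i ≤ ∑ i ∈ s, x i ^ ∑ j ∈ s, k j := by
  obtain ⟨i, hi, hmax⟩ := s.exists_max_image x hs
  calc ∏ j ∈ s, x j ^ k j ≤ ∏ j ∈ s, x i ^ k j :=
        Finset.prod_le_prod (fun j hj => pow_nonneg (hx j hj) _)
          fun j hj => pow_le_pow_left₀ (hx j hj) (hmax j hj) _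
    _ = x i ^ ∑ j ∈ s, k j := Finset.prod_pow_eq_pow_sum _ _ _
    _ ≤ ∑ j ∈ s, x j ^ ∑ j ∈ s, k j :=
        Finset.single_le_sum (f := fun j => x j ^ ∑ j ∈ s, k j)
          (fun j hj => pow_nonneg (hx j hj) _) hi

lemma IsDiagram.diagramValue_fin_four_le {m : Fin 4 → Fin 4 → ℕ} {q : ℕ}
    (hm : IsDiagram m fun _ => q) {C : Fin 4 → Fin 4 → ℝ} (hC : ∀ i j, C i j = C j i) :
    diagramValue C m ≤ |C 0 1 * C 2 3| ^ q + |C 0 2 * C 1 3| ^ q + |C 0 3 * C 1 2| ^ q := by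
  have hdegree := hm.degree_eq
  simp only [Fin.sum_univ_four] at hdegree
  have hloop := hm.loopless
  have h01 : m 0 1 + m 1 0 = m 2 3 + m 3 2 := by
    linarith [hdegree 0, hdegree 1, hdegree 2, hdegree 3, hloop 0, hloop 1, hloop 2, hloop 3]
  have h02 : m 0 2 + m 2 0 = m 1 3 + m 3 1 := by
    linarith [hdegree 0, hdegree 1, hdegree 2, hdegree 3, hloop 0, hloop 1, hloop 2, hloop 3]
  have h03 : m 0 3 + m 3 0 = m 1 2 + m 2 1 := by
    linarith [hdegree 0, hdegree 1, hdegree 2, hdegree 3, hloop 0, hloop 1, hloop 2, hloop 3]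
  have hsum : (m 0 1 + m 1 0) + (m 0 2 + m 2 0) + (m 0 3 + m 3 0) = q := by
    linarith [hdegree 0, hloop 0]
  have hpair {x y : ℝ} {a b c d : ℕ} (h : a + b = c + d) :
      |x * y| ^ (a + b) = |x| ^ a * |x| ^ b * (|y| ^ c * |y| ^ d) := by
    rw [abs_mul, mul_pow, ← pow_add, ← pow_add, h]
  have hvalue : diagramValue C m = |C 0 1 * C 2 3| ^ (m 0 1 + m 1 0)
      * |C 0 2 * C 1 3| ^ (m 0 2 + m 2 0) * |C 0 3 * C 1 2| ^ (m 0 3 + m 3 0) := by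
    rw [hpair h01, hpair h02, hpair h03]
    simp only [diagramValue, Fin.prod_univ_four, hloop, pow_zero]
    rw [hC 1 0, hC 2 0, hC 3 0, hC 2 1, hC 3 1, hC 3 2]
    ring
  have hmean := prod_pow_le_sum_pow_sum (s := Finset.univ) Finset.univ_nonempty
    (x := ![|C 0 1 * C 2 3|, |C 0 2 * C 1 3|, |C 0 3 * C 1 2|])
    (by simp [Fin.forall_fin_succ, mul_nonneg]) ![m 0 1 + m 1 0, m 0 2 + m 2 0, m 0 3 + m 3 0]
  rw [hvalue]
  simpa [Fin.prod_univ_three, Fin.sum_univ_three, hsum] using hmean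

theorem abs_integral_prod_hermite_fin_four_le {Ω : Type*} {mΩ : MeasurableSpace Ω} {μ : Measure Ω}
    {X : Fin 4 → Ω → ℝ} (hX : IsGaussianProcess X μ) (hmean : ∀ i, μ[X i] = 0)
    (hvar : ∀ i, Var[X i; μ] = 1) (q : ℕ) :
    |∫ ω, ∏ i, Polynomial.aeval (X i ω) (Polynomial.hermite q) ∂μ|
      ≤ (4 * q).factorial * (|cov[X 0, X 1; μ] * cov[X 2, X 3; μ]| ^ q
          + |cov[X 0, X 2; μ] * cov[X 1, X 3; μ]| ^ q
          + |cov[X 0, X 3; μ] * cov[X 1, X 2; μ]| ^ q) := by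
  have hbound := exists_isDiagram_abs_integral_hermiteProd_le hX hmean hvar fun _ => q
  simp only [eval_hermiteProd] at hbound
  rcases eq_or_ne (∫ ω, ∏ i, Polynomial.aeval (X i ω) (Polynomial.hermite q) ∂μ) 0 with h0 | h0
  · rw [h0, abs_zero]
    positivity
  · obtain ⟨m, hm, hle⟩ := hbound h0
    refine hle.trans ?_
    rw [Finset.sum_const, Finset.card_univ, Fintype.card_fin, smul_eq_mul]
    gcongr
    exact hm.diagramValue_fin_four_le fun i j => covariance_comm _ _

end FourVertices

section FourthMoment

variable {κ Ω : Type*} {mΩ : MeasurableSpace Ω} {μ : Measure Ω} {X : κ → Ω → ℝ}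

lemma sum_pow_four_eq {R : Type*} [CommSemiring R] (s : Finset κ) (f : κ → R) :
    (∑ k ∈ s, f k) ^ 4 = ∑ a ∈ s, ∑ b ∈ s, ∑ c ∈ s, ∑ d ∈ s, f a * f b * f c * f d := by
  simp only [← Finset.mul_sum, ← Finset.sum_mul]
  ring

lemma sum_pairings_eq {R : Type*} [CommSemiring R] (s : Finset κ) (r : κ → κ → R) :
    ∑ a ∈ s, ∑ b ∈ s, ∑ c ∈ s, ∑ d ∈ s, (r a b * r c d + r a c * r b d + r a d * r b c)
      = 3 * (∑ a ∈ s, ∑ b ∈ s, r a b) ^ 2 := by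
  have hcd : ∑ a ∈ s, ∑ b ∈ s, ∑ c ∈ s, ∑ d ∈ s, r a c * r b d
      = (∑ a ∈ s, ∑ b ∈ s, r a b) ^ 2 := by
    simp only [← Finset.mul_sum, ← Finset.sum_mul, sq]
  have hab : ∑ a ∈ s, ∑ b ∈ s, ∑ c ∈ s, ∑ d ∈ s, r a b * r c d
      = (∑ a ∈ s, ∑ b ∈ s, r a b) ^ 2 := by
    simp only [← Finset.mul_sum, ← Finset.sum_mul, sq]
  have had : ∑ a ∈ s, ∑ b ∈ s, ∑ c ∈ s, ∑ d ∈ s, r a d * r b c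
      = (∑ a ∈ s, ∑ b ∈ s, r a b) ^ 2 := by
    simp only [← Finset.mul_sum, ← Finset.sum_mul, sq]
  simp only [Finset.sum_add_distrib, hab, hcd, had]
  ring

lemma integrable_prod_hermite (hX : IsGaussianProcess X μ) (q : ℕ) (a b c d : κ) :
    Integrable (fun ω => Polynomial.aeval (X a ω) (Polynomial.hermite q)
      * Polynomial.aeval (X b ω) (Polynomial.hermite q)
      * Polynomial.aeval (X c ω) (Polynomial.hermite q)
      * Polynomial.aeval (X d ω) (Polynomial.hermite q)) μ := by
  have hint := integrable_mvPolynomial_eval_of_isGaussianProcess (hX.comp_right ![a, b, c, d])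
    (hermiteProd fun _ => q)
  simpa [eval_hermiteProd, Fin.prod_univ_four] using hint

lemma integrable_sum_hermite_pow_four (hX : IsGaussianProcess X μ) (q : ℕ) (s : Finset κ) :
    Integrable (fun ω => (∑ k ∈ s, Polynomial.aeval (X k ω) (Polynomial.hermite q)) ^ 4) μ := by
  simp only [sum_pow_four_eq]
  exact integrable_finsetSum _ fun a _ => integrable_finsetSum _ fun b _ =>
    integrable_finsetSum _ fun c _ => integrable_finsetSum _ fun d _ =>
      integrable_prod_hermite hX q a b c d

theorem integral_sum_hermite_pow_four_le (hX : IsGaussianProcess X μ) (hmean : ∀ k, μ[X k] = 0)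
    (hvar : ∀ k, Var[X k; μ] = 1) (q : ℕ) (s : Finset κ) :
    ∫ ω, (∑ k ∈ s, Polynomial.aeval (X k ω) (Polynomial.hermite q)) ^ 4 ∂μ
      ≤ 3 * (4 * q).factorial * (∑ k ∈ s, ∑ l ∈ s, |cov[X k, X l; μ]| ^ q) ^ 2 := by
  let f (k : κ) (ω : Ω) : ℝ := Polynomial.aeval (X k ω) (Polynomial.hermite q)
  let r (k l : κ) : ℝ := |cov[X k, X l; μ]| ^ q
  have hint (a b c d : κ) : Integrable (fun ω => f a ω * f b ω * f c ω * f d ω) μ :=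
    integrable_prod_hermite hX q a b c d
  have hprod (a b c d : κ) : ∫ ω, f a ω * f b ω * f c ω * f d ω ∂μ
      ≤ (4 * q).factorial * (r a b * r c d + r a c * r b d + r a d * r b c) := by
    have hle := (le_abs_self _).trans <| abs_integral_prod_hermite_fin_four_le
      (hX.comp_right ![a, b, c, d]) (fun _ => hmean _) (fun _ => hvar _) q
    simpa only [Fin.prod_univ_four, abs_mul, mul_pow] using! hle
  calc ∫ ω, (∑ k ∈ s, f k ω) ^ 4 ∂μ
      = ∫ ω, ∑ a ∈ s, ∑ b ∈ s, ∑ c ∈ s, ∑ d ∈ s, f a ω * f b ω * f c ω * f d ω ∂μ := by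
        simp only [sum_pow_four_eq]
    _ = ∑ a ∈ s, ∑ b ∈ s, ∑ c ∈ s, ∑ d ∈ s, ∫ ω, f a ω * f b ω * f c ω * f d ω ∂μ := by
        simp (disch := intros; fun_prop (disch := assumption)) only [integral_finsetSum]
    _ ≤ ∑ a ∈ s, ∑ b ∈ s, ∑ c ∈ s, ∑ d ∈ s,
          (4 * q).factorial * (r a b * r c d + r a c * r b d + r a d * r b c) := by
        gcongr
        exact hprod _ _ _ _
    _ = 3 * (4 * q).factorial * (∑ k ∈ s, ∑ l ∈ s, r k l) ^ 2 := by
        simp only [← Finset.mul_sum, sum_pairings_eq]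
        ring

end FourthMoment

section FractionalGaussianNoise

/-- The autocovariance at lag `r` of fractional Gaussian noise, i.e. of the increments of a
fractional Brownian motion with Hurst parameter `H` over intervals of length one. -/
noncomputable def fgnCovariance (H r : ℝ) : ℝ :=
  (|r + 1| ^ (2 * H) + |r - 1| ^ (2 * H) - 2 * |r| ^ (2 * H)) / 2

lemma fgnCovariance_neg (H r : ℝ) : fgnCovariance H (-r) = fgnCovariance H r := by
  have h₁ : |-r + 1| = |r - 1| := by rw [← abs_neg]; congr 1; ring
  have h₂ : |-r - 1| = |r + 1| := by rw [← abs_neg]; congr 1; ring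
  rw [fgnCovariance, fgnCovariance, h₁, h₂, abs_neg]
  ring

lemma fgnCovariance_zero {H : ℝ} (hH : H ≠ 0) : fgnCovariance H 0 = 1 := by
  simp [fgnCovariance, zero_rpow (mul_ne_zero two_ne_zero hH)]

lemma exists_second_difference_eq {f f' f'' : ℝ → ℝ} {x h : ℝ} (hh : 0 < h)
    (hf : ∀ y ∈ Set.Icc (x - h) (x + h), HasDerivAt f (f' y) y)
    (hf' : ∀ y ∈ Set.Icc (x - h) (x + h), HasDerivAt f' (f'' y) y) :
    ∃ ξ ∈ Set.Ioo (x - h) (x + h), f (x + h) + f (x - h) - 2 * f x = h ^ 2 * f'' ξ := by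
  have hdiff (y : ℝ) (hy : y ∈ Set.Icc (x - h) x) :
      HasDerivAt (fun y => f (y + h) - f y) (f' (y + h) - f' y) y :=
    ((hf (y + h) ⟨by linarith [hy.1], by linarith [hy.2]⟩).comp_add_const y h).sub
      (hf y ⟨hy.1, by linarith [hy.2]⟩)
  obtain ⟨η, hη, hη_eq⟩ := exists_hasDerivAt_eq_slope (fun y => f (y + h) - f y)
    (fun y => f' (y + h) - f' y) (sub_lt_self x hh)
    (fun y hy => (hdiff y hy).continuousAt.continuousWithinAt)
    fun y hy => hdiff y (Set.Ioo_subset_Icc_self hy)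
  have hη_sub : Set.Icc η (η + h) ⊆ Set.Icc (x - h) (x + h) :=
    Set.Icc_subset_Icc hη.1.le (by linarith [hη.2])
  obtain ⟨ξ, hξ, hξ_eq⟩ := exists_hasDerivAt_eq_slope f' f'' (lt_add_of_pos_right η hh)
    (fun y hy => (hf' y (hη_sub hy)).continuousAt.continuousWithinAt)
    fun y hy => hf' y (hη_sub (Set.Ioo_subset_Icc_self hy))
  refine ⟨ξ, ⟨hη.1.trans hξ.1, by linarith [hξ.2, hη.2]⟩, ?_⟩
  simp only [sub_sub_cancel, sub_add_cancel] at hη_eq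
  rw [add_sub_cancel_left] at hξ_eq
  field_simp at hη_eq hξ_eq
  linear_combination -hη_eq - h * hξ_eq

lemma abs_fgnCovariance_le {H x : ℝ} (hH : H ≤ 1) (hx : 1 < x) :
    |fgnCovariance H x| ≤ |H * (2 * H - 1)| * (x - 1) ^ (2 * H - 2) := by
  have hpow (p y : ℝ) (hy : y ∈ Set.Icc (x - 1) (x + 1)) :
      HasDerivAt (· ^ p) (p * y ^ (p - 1)) y :=
    hasDerivAt_rpow_const (Or.inl (by linarith [hy.1] : 0 < y).ne')
  obtain ⟨ξ, hξ, hξ_eq⟩ := exists_second_difference_eq one_pos (hpow (2 * H))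
    fun y hy => (hpow (2 * H - 1) y hy).const_mul (2 * H)
  have hexp : 2 * H - 1 - 1 = 2 * H - 2 := by ring
  have hcov : fgnCovariance H x = H * (2 * H - 1) * ξ ^ (2 * H - 2) := by
    rw [fgnCovariance, abs_of_pos (by linarith : 0 < x + 1), abs_of_pos (by linarith : 0 < x - 1),
      abs_of_pos (by linarith : 0 < x), hξ_eq, hexp]
    ring
  rw [hcov, abs_mul, abs_of_nonneg (rpow_nonneg (by linarith [hξ.1]) _)]
  gcongr ?_ * ?_
  exact rpow_le_rpow_of_nonpos (by linarith) hξ.1.le (by linarith)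

lemma summable_abs_fgnCovariance_pow {H : ℝ} {q : ℕ} (hq : q ≠ 0) (hH : H < 1 - 1 / (2 * q)) :
    Summable fun r : ℤ => |fgnCovariance H r| ^ q := by
  have hq' : (0 : ℝ) < q := by positivity
  have hH1 : H ≤ 1 := hH.le.trans (by simp)
  have hexp : (2 * H - 2) * q < -1 := by
    have : (1 / (2 * q) : ℝ) * (2 * q) = 1 := by field_simp
    nlinarith
  have hmajorant : Summable fun m : ℕ =>
      (|H * (2 * H - 1)| * ((m + 1 : ℕ) : ℝ) ^ (2 * H - 2)) ^ q := by
    simp only [mul_pow, ← rpow_mul_natCast (Nat.cast_nonneg _)]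
    exact ((summable_nat_add_iff 1).2 (summable_nat_rpow.2 hexp)).mul_left _
  have hnat : Summable fun r : ℕ => |fgnCovariance H r| ^ q := by
    refine (summable_nat_add_iff 2).1 (.of_nonneg_of_le (fun m => by positivity) (fun m => ?_)
      hmajorant)
    have hle := abs_fgnCovariance_le (x := ((m + 2 : ℕ) : ℝ)) hH1 (by push_cast; linarith)
    have hshift : ((m + 2 : ℕ) : ℝ) - 1 = (m + 1 : ℕ) := by push_cast; ring
    rw [hshift] at hle
    gcongr
  refine .of_nat_of_neg (by simpa using hnat) ?_
  simpa [fgnCovariance_neg] using hnat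

lemma sum_sum_range_sub_le_mul_tsum {f : ℤ → ℝ} (hf : Summable f) (hnonneg : ∀ r, 0 ≤ f r)
    (n : ℕ) : ∑ k ∈ Finset.range n, ∑ l ∈ Finset.range n, f (k - l) ≤ n * ∑' r, f r := by
  have hrow (k : ℕ) : ∑ l ∈ Finset.range n, f (k - l) ≤ ∑' r, f r := by
    have hinj : Set.InjOn (fun l : ℕ => (k : ℤ) - l) (Finset.range n) := fun l _ l' _ h => by
      simpa using h
    rw [← Finset.sum_image (f := f) hinj]
    exact hf.sum_le_tsum _ fun r _ => hnonneg r
  calc ∑ k ∈ Finset.range n, ∑ l ∈ Finset.range n, f (k - l)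
      ≤ ∑ _k ∈ Finset.range n, ∑' r, f r := Finset.sum_le_sum fun k _ => hrow k
    _ = n * ∑' r, f r := by rw [Finset.sum_const, Finset.card_range, nsmul_eq_mul]

end FractionalGaussianNoise

section FractionalBrownianMotion

variable {Ω : Type*} [MeasureSpace Ω] {B : ℝ → Ω → ℝ} {H : ℝ}

lemma IsFractionalBrownianMotion.isGaussianProcess (hB : IsFractionalBrownianMotion B H) :
    IsGaussianProcess (fun t : NNReal => B t) ℙ where
  hasGaussianLaw I := by
    have hmeas : Measurable fun ω => I.restrict fun t : NNReal => B t ω :=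
      measurable_pi_lambda _ fun t => hB.measurable t
    refine ⟨isGaussian_of_map_eq_gaussianReal fun L => ?_⟩
    obtain ⟨v, hv⟩ := hB.gaussian_fdd I.card (fun i => (I.equivFin.symm i : NNReal))
      (fun i => NNReal.coe_nonneg _) fun i => L (Pi.single (I.equivFin.symm i) 1)
    refine ⟨0, v, ?_⟩
    rw [Measure.map_map L.continuous.measurable hmeas, ← hv]
    congr 1
    ext ω
    rw [I.equivFin.symm.sum_comp fun t => L (Pi.single t 1) * B t ω, Function.comp_apply,
      ← L.coe_coe, LinearMap.pi_apply_eq_sum_univ]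
    simp [mul_comm, ← Pi.single_apply, Pi.single_comm]

lemma IsFractionalBrownianMotion.integral_eq_zero (hB : IsFractionalBrownianMotion B H) {t : ℝ}
    (ht : 0 ≤ t) : ∫ ω, B t ω = 0 := by
  obtain ⟨v, hv⟩ := hB.gaussian_fdd 1 (fun _ => t) (fun _ => ht) fun _ => 1
  simp only [Finset.univ_unique, Finset.sum_const, Finset.card_singleton, one_smul, one_mul] at hv
  calc ∫ ω, B t ω = ∫ x, x ∂Measure.map (B t) ℙ :=
        (integral_map (hB.measurable t).aemeasurable aestronglyMeasurable_id).symm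
    _ = 0 := by rw [hv, integral_id_gaussianReal]

lemma IsFractionalBrownianMotion.memLp_two (hB : IsFractionalBrownianMotion B H) {t : ℝ}
    (ht : 0 ≤ t) : MemLp (B t) 2 :=
  (hB.isGaussianProcess.hasGaussianLaw_eval ⟨t, ht⟩).memLp_two

lemma IsFractionalBrownianMotion.covariance_eq (hB : IsFractionalBrownianMotion B H) {s t : ℝ}
    (hs : 0 ≤ s) (ht : 0 ≤ t) :
    cov[B s, B t; ℙ] = (s ^ (2 * H) + t ^ (2 * H) - |t - s| ^ (2 * H)) / 2 := by
  have := hB.isGaussianProcess.isProbabilityMeasure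
  rw [covariance_eq_sub (hB.memLp_two hs) (hB.memLp_two ht), hB.integral_eq_zero hs, zero_mul,
    sub_zero]
  exact hB.covariance s t hs ht

/-- The increment of `B` over the `k`-th interval of the regular mesh of width `1 / n`, rescaled so
that it has unit variance when `B` is a fractional Brownian motion with Hurst parameter `H`. -/
noncomputable def normalizedIncrement (B : ℝ → Ω → ℝ) (H : ℝ) (n k : ℕ) (ω : Ω) : ℝ :=
  (n : ℝ) ^ H * (B (((k : ℝ) + 1) / n) ω - B ((k : ℝ) / n) ω)

lemma IsFractionalBrownianMotion.isGaussianProcess_normalizedIncrement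
    (hB : IsFractionalBrownianMotion B H) (n : ℕ) :
    IsGaussianProcess (normalizedIncrement B H n) ℙ := by
  refine hB.isGaussianProcess.of_isGaussianProcess fun k => ?_
  let s : NNReal := ⟨((k : ℝ) + 1) / n, by positivity⟩
  let t : NNReal := ⟨(k : ℝ) / n, by positivity⟩
  exact ⟨{s, t}, (n : ℝ) ^ H • (.proj ⟨s, by simp⟩ - .proj ⟨t, by simp⟩), fun ω => rfl⟩

lemma IsFractionalBrownianMotion.integral_normalizedIncrement
    (hB : IsFractionalBrownianMotion B H) (n k : ℕ) : ∫ ω, normalizedIncrement B H n k ω = 0 := by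
  have := hB.isGaussianProcess.isProbabilityMeasure
  have hs : 0 ≤ ((k : ℝ) + 1) / n := by positivity
  have ht : 0 ≤ (k : ℝ) / n := by positivity
  simp only [normalizedIncrement]
  rw [integral_const_mul, integral_sub ((hB.memLp_two hs).integrable one_le_two)
    ((hB.memLp_two ht).integrable one_le_two), hB.integral_eq_zero hs, hB.integral_eq_zero ht,
    sub_zero, mul_zero]

lemma IsFractionalBrownianMotion.covariance_normalizedIncrement
    (hB : IsFractionalBrownianMotion B H) {n : ℕ} (hn : n ≠ 0) (k l : ℕ) :
    cov[normalizedIncrement B H n k, normalizedIncrement B H n l; ℙ]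
      = fgnCovariance H ((k : ℝ) - l) := by
  have hn' : (0 : ℝ) < n := by positivity
  have hscale (x y : ℝ) : |y / n - x / n| ^ (2 * H) = |y - x| ^ (2 * H) / (n : ℝ) ^ (2 * H) := by
    rw [← sub_div, abs_div, abs_of_pos hn', div_rpow (abs_nonneg _) hn'.le]
  have hs (k : ℕ) : 0 ≤ ((k : ℝ) + 1) / n := by positivity
  have ht (k : ℕ) : 0 ≤ (k : ℝ) / n := by positivity
  have hincrement : MemLp (fun ω => B (((l : ℝ) + 1) / n) ω - B ((l : ℝ) / n) ω) 2 ℙ :=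
    (hB.memLp_two (hs l)).sub (hB.memLp_two (ht l))
  have := hB.isGaussianProcess.isProbabilityMeasure
  have hpow : (n : ℝ) ^ (2 * H) = (n : ℝ) ^ H * (n : ℝ) ^ H := by rw [two_mul, rpow_add hn']
  have hlag : (l : ℝ) + 1 - (k + 1) = l - k := by ring
  have hplus : (l : ℝ) - (k + 1) = -(k - l + 1) := by ring
  have hminus : (l : ℝ) + 1 - k = -(k - l - 1) := by ring
  unfold normalizedIncrement
  rw [covariance_const_mul_left, covariance_const_mul_right,
    covariance_fun_sub_left (hB.memLp_two (hs k)) (hB.memLp_two (ht k)) hincrement,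
    covariance_fun_sub_right (hB.memLp_two (hs k)) (hB.memLp_two (hs l)) (hB.memLp_two (ht l)),
    covariance_fun_sub_right (hB.memLp_two (ht k)) (hB.memLp_two (hs l)) (hB.memLp_two (ht l))]
  simp only [hB.covariance_eq, hs, ht, hscale, hlag, hplus, hminus, abs_neg]
  rw [fgnCovariance, abs_sub_comm (l : ℝ) k, hpow]
  have hnH : (n : ℝ) ^ H ≠ 0 := (rpow_pos_of_pos hn' _).ne'
  field_simp
  ring

theorem IsFractionalBrownianMotion.exists_integral_hermiteVariation_pow_four_le
    (hB : IsFractionalBrownianMotion B H) {q : ℕ} (hq : q ≠ 0) (hH₀ : H ≠ 0)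
    (hH : H < 1 - 1 / (2 * q)) :
    ∃ K : ℝ, ∀ n : ℕ, ∫ ω, hermiteVariation B H q n ω ^ 4 ≤ K * (n : ℝ) ^ 2 := by
  set S : ℝ := ∑' r : ℤ, |fgnCovariance H r| ^ q
  refine ⟨3 * (4 * q).factorial * S ^ 2, fun n => ?_⟩
  rcases eq_or_ne n 0 with rfl | hn
  · simp [hermiteVariation]
  have hcov := hB.covariance_normalizedIncrement hn
  have hX := hB.isGaussianProcess_normalizedIncrement n
  have hvar (k : ℕ) : Var[normalizedIncrement B H n k; ℙ] = 1 := by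
    rw [← covariance_self (hX.aemeasurable k), hcov, sub_self, fgnCovariance_zero hH₀]
  have hsum : ∑ k ∈ Finset.range n, ∑ l ∈ Finset.range n, |fgnCovariance H ((k : ℝ) - l)| ^ q
      ≤ n * S := by
    simpa using sum_sum_range_sub_le_mul_tsum (summable_abs_fgnCovariance_pow hq hH)
      (fun r => by positivity) n
  calc ∫ ω, hermiteVariation B H q n ω ^ 4
      ≤ 3 * (4 * q).factorial * (∑ k ∈ Finset.range n, ∑ l ∈ Finset.range n,
          |fgnCovariance H ((k : ℝ) - l)| ^ q) ^ 2 := by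
        simpa only [hcov] using! integral_sum_hermite_pow_four_le hX
          (hB.integral_normalizedIncrement n) hvar q (Finset.range n)
    _ ≤ 3 * (4 * q).factorial * (n * S) ^ 2 := by gcongr
    _ = 3 * (4 * q).factorial * S ^ 2 * (n : ℝ) ^ 2 := by ring

lemma IsFractionalBrownianMotion.integrable_hermiteVariation_pow_four
    (hB : IsFractionalBrownianMotion B H) (q n : ℕ) :
    Integrable fun ω => hermiteVariation B H q n ω ^ 4 :=
  integrable_sum_hermite_pow_four (hB.isGaussianProcess_normalizedIncrement n) q _

lemma IsFractionalBrownianMotion.measurable_hermiteVariation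
    (hB : IsFractionalBrownianMotion B H) (q n : ℕ) : Measurable (hermiteVariation B H q n) :=
  Finset.measurable_sum _ fun _ _ => (Polynomial.continuous_aeval _).measurable.comp <|
    ((hB.measurable _).sub (hB.measurable _)).const_mul _

end FractionalBrownianMotion

section RiemannSum

lemma map_floor_restrict_Ioi :
    (volume.restrict (Set.Ioi (0 : ℝ))).map Nat.floor = (Measure.count : Measure ℕ) := by
  refine Measure.ext_of_singleton fun n => ?_
  have hpreimage : Nat.floor ⁻¹' {n} ∩ Set.Ici (0 : ℝ) = Set.Ico (n : ℝ) (n + 1) := by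
    ext x
    simp only [Set.mem_inter_iff, Set.mem_preimage, Set.mem_singleton_iff, Set.mem_Ici, Set.mem_Ico]
    constructor
    · rintro ⟨hn, hx⟩
      exact (Nat.floor_eq_iff hx).1 hn
    · intro h
      have hx : 0 ≤ x := n.cast_nonneg.trans h.1
      exact ⟨(Nat.floor_eq_iff hx).2 h, hx⟩
  rw [restrict_Ioi_eq_restrict_Ici, Measure.map_apply Nat.measurable_floor (.singleton n),
    Measure.restrict_apply (Nat.measurable_floor (.singleton n)), hpreimage, volume_Ico,
    Measure.count_singleton, add_sub_cancel_left, ENNReal.ofReal_one]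

lemma integral_count_eq_tsum (a : ℕ → ℝ) : ∫ n, a n ∂Measure.count = ∑' n, a n := by
  by_cases ha : Integrable a Measure.count
  · simp [integral_countable ha]
  · rw [integral_undef ha, tsum_eq_zero_of_not_summable]
    rwa [integrable_count_iff, summable_norm_iff] at ha

lemma setIntegral_Ioi_floor_div (a : ℕ → ℝ) {δ : ℝ} (hδ : 0 < δ) :
    ∫ x in Set.Ioi (0 : ℝ), a ⌊x / δ⌋₊ = δ * ∑' n, a n := by
  simp only [div_eq_mul_inv]
  rw [integral_comp_mul_right_Ioi (fun x => a ⌊x⌋₊) 0 (inv_pos.2 hδ), zero_mul, inv_inv,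
    ← integral_count_eq_tsum, ← map_floor_restrict_Ioi,
    integral_map Nat.measurable_floor.aemeasurable (measurable_of_countable a).aestronglyMeasurable,
    smul_eq_mul]

lemma tendsto_mul_floor_div_add_one {x : ℝ} (hx : 0 ≤ x) :
    Tendsto (fun δ : ℝ => δ * ((⌊x / δ⌋₊ : ℝ) + 1)) (𝓝[>] 0) (𝓝 x) := by
  have hfloor := (tendsto_nat_floor_mul_div_atTop hx).comp tendsto_inv_nhdsGT_zero
  have hδ : Tendsto (fun δ : ℝ => δ) (𝓝[>] 0) (𝓝 0) := tendsto_id.mono_right nhdsWithin_le_nhds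
  have hsum := hfloor.add hδ
  rw [add_zero] at hsum
  refine hsum.congr fun δ => ?_
  simp only [Function.comp_apply, div_eq_mul_inv, inv_inv]
  ring

lemma le_mul_floor_div_add_one (x : ℝ) {δ : ℝ} (hδ : 0 < δ) :
    x ≤ δ * ((⌊x / δ⌋₊ : ℝ) + 1) :=
  (div_le_iff₀' hδ).1 (Nat.lt_floor_add_one _).le

variable {Ω Ω' : Type*} {mΩ : MeasurableSpace Ω} {mΩ' : MeasurableSpace Ω'} {μ : Measure Ω}
  {μ' : Measure Ω'} [IsProbabilityMeasure μ] [IsProbabilityMeasure μ'] {W₀ : Ω' → ℝ}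

lemma tendsto_measureReal_lt_of_tendstoInDistribution {ι : Type*} {l : Filter ι}
    [l.IsCountablyGenerated] {W : ι → Ω → ℝ}
    (hW : MeasureTheory.TendstoInDistribution W l W₀ (fun _ => μ) μ') {t : ι → ℝ} {x : ℝ}
    (ht : Tendsto t l (𝓝 x)) (hx : μ' {ω | W₀ ω = x} = 0) :
    Tendsto (fun i => μ.real {ω | t i < W i ω}) l (𝓝 (μ'.real {ω | x < W₀ ω})) := by
  have hconst : TendstoInMeasure μ (fun i _ => t i) l fun _ => x := by
    intro ε hε
    refine tendsto_const_nhds.congr' ?_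
    filter_upwards [ht.eventually (Metric.eball_mem_nhds x hε)] with i hi
    simp [not_le.2 (Metric.mem_eball.1 hi)]
  have hsub := hW.continuous_comp_prodMk_of_tendstoInMeasure_const (g := fun p => p.1 - p.2)
    (by fun_prop) hconst fun _ => aemeasurable_const
  have hnull : (μ'.map fun ω => W₀ ω - x) (frontier (Set.Ioi 0)) = 0 := by
    rw [frontier_Ioi, Measure.map_apply_of_aemeasurable hsub.aemeasurable_limit (.singleton 0)]
    simpa [Set.preimage, sub_eq_zero] using hx
  have htail := ProbabilityMeasure.tendsto_measure_of_null_frontier_of_tendsto hsub.tendsto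
    (ProbabilityMeasure.null_iff_toMeasure_null _ _ |>.2 hnull)
  simpa [Measure.map_apply_of_aemeasurable, hsub.aemeasurable_limit, hsub.forall_aemeasurable,
    Measure.real, ENNReal.toReal, Set.preimage] using htail

theorem tendsto_mul_tsum_measureReal_lt {W : ℕ → Ω → ℝ}
    (hW : MeasureTheory.TendstoInDistribution W atTop W₀ (fun _ => μ) μ')
    (hint : Integrable W₀ μ') (hnonneg : 0 ≤ᵐ[μ'] W₀) {g : ℝ → ℝ}
    (hg : IntegrableOn g (Set.Ioi 0))
    (htail : ∀ n, ∀ x > 0, μ.real {ω | x < W n ω} ≤ g x) :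
    Tendsto (fun δ : ℝ => δ * ∑' n : ℕ, μ.real {ω | δ * ((n : ℝ) + 1) < W (n + 1) ω}) (𝓝[>] 0)
      (𝓝 (∫ ω, W₀ ω ∂μ')) := by
  let F (δ x : ℝ) : ℝ := μ.real {ω | δ * ((⌊x / δ⌋₊ : ℝ) + 1) < W (⌊x / δ⌋₊ + 1) ω}
  have hF_meas (δ : ℝ) : Measurable (F δ) :=
    (measurable_of_countable fun n : ℕ => μ.real {ω | δ * ((n : ℝ) + 1) < W (n + 1) ω}).comp
      (Nat.measurable_floor.comp (measurable_id.div_const δ))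
  have hF_le {δ x : ℝ} (hδ : 0 < δ) (hx : 0 < x) : ‖F δ x‖ ≤ g x := by
    rw [norm_of_nonneg measureReal_nonneg]
    refine (measureReal_mono fun ω hω => ?_).trans (htail (⌊x / δ⌋₊ + 1) x hx)
    exact (le_mul_floor_div_add_one x hδ).trans_lt hω
  have hF_tendsto {x : ℝ} (hx : 0 < x) (hatom : μ' {ω | W₀ ω = x} = 0) :
      Tendsto (F · x) (𝓝[>] 0) (𝓝 (μ'.real {ω | x < W₀ ω})) := by
    have hindex : Tendsto (fun δ : ℝ => ⌊x / δ⌋₊ + 1) (𝓝[>] 0) atTop :=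
      (tendsto_add_atTop_nat 1).comp <| tendsto_nat_floor_atTop.comp <|
        tendsto_inv_nhdsGT_zero.const_mul_atTop hx
    exact tendsto_measureReal_lt_of_tendstoInDistribution
      (W := fun δ => W (⌊x / δ⌋₊ + 1))
      ⟨fun δ => hW.forall_aemeasurable _, hW.aemeasurable_limit, hW.tendsto.comp hindex⟩
      (tendsto_mul_floor_div_add_one hx.le) hatom
  have hatoms : ∀ᵐ x : ℝ, μ' {ω | W₀ ω = x} = 0 := by
    filter_upwards [(Measure.countable_meas_level_set_pos₀
      hW.aemeasurable_limit.nullMeasurable).ae_notMem volume] with x hx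
    simpa using hx
  have hlim : Tendsto (fun δ => ∫ x in Set.Ioi 0, F δ x) (𝓝[>] 0) (𝓝 (∫ ω, W₀ ω ∂μ')) := by
    rw [hint.integral_eq_integral_meas_lt hnonneg]
    refine tendsto_integral_filter_of_dominated_convergence g
      (.of_forall fun δ => (hF_meas δ).aestronglyMeasurable) ?_ hg ?_
    · filter_upwards [self_mem_nhdsWithin] with δ hδ
      filter_upwards [ae_restrict_mem measurableSet_Ioi] with x hx using hF_le hδ hx
    · filter_upwards [ae_restrict_mem measurableSet_Ioi, ae_restrict_of_ae hatoms] with x hx hatom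
        using hF_tendsto hx hatom
  refine hlim.congr' ?_
  filter_upwards [self_mem_nhdsWithin] with δ hδ using setIntegral_Ioi_floor_div
    (fun n : ℕ => μ.real {ω | δ * ((n : ℝ) + 1) < W (n + 1) ω}) hδ

end RiemannSum

section HsuRobbins

lemma TendstoInDistribution.tendstoInDistribution_id {Ω : Type*} [MeasureSpace Ω]
    [IsProbabilityMeasure (ℙ : Measure Ω)] {Z : ℕ → Ω → ℝ} {γ : Measure ℝ}
    [IsProbabilityMeasure γ] (hZ : ∀ n, AEMeasurable (Z n)) (h : TendstoInDistribution Z γ) :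
    MeasureTheory.TendstoInDistribution Z atTop id (fun _ => ℙ) γ := by
  refine ⟨hZ, aemeasurable_id, ProbabilityMeasure.tendsto_iff_forall_integral_tendsto.2 fun f => ?_⟩
  simpa [integral_map, hZ, f.continuous.aestronglyMeasurable] using h f

lemma integral_sq_gaussianReal (v : NNReal) : ∫ x, x ^ 2 ∂gaussianReal 0 v = v := by
  have := variance_of_integral_eq_zero (μ := gaussianReal 0 v) aemeasurable_id
    integral_id_gaussianReal
  simpa [variance_id_gaussianReal] using this.symm

lemma measureReal_lt_le_of_integral_sq_le {Ω : Type*} {mΩ : MeasurableSpace Ω} {μ : Measure Ω}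
    [IsProbabilityMeasure μ] {W : Ω → ℝ} (hW : Integrable (fun ω => W ω ^ 2) μ) {K : ℝ}
    (hK : ∫ ω, W ω ^ 2 ∂μ ≤ K) {x : ℝ} (hx : 0 < x) :
    μ.real {ω | x < W ω} ≤ (1 + K) * (1 + x ^ 2)⁻¹ := by
  have hmarkov : x ^ 2 * μ.real {ω | x < W ω} ≤ K := by
    refine le_trans ?_ ((mul_meas_ge_le_integral_of_nonneg (.of_forall fun ω => sq_nonneg (W ω))
      hW (x ^ 2)).trans hK)
    refine mul_le_mul_of_nonneg_left (measureReal_mono fun ω hω => ?_) (sq_nonneg x)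
    exact pow_le_pow_left₀ hx.le hω.le 2
  rw [← div_eq_mul_inv, le_div_iff₀ (by positivity)]
  linarith [measureReal_le_one (μ := μ) (s := {ω | x < W ω})]

lemma setOf_mul_lt_abs_eq {Ω : Type*} (V : Ω → ℝ) {ε t : ℝ} (hε : 0 ≤ ε) (ht : 0 < t) :
    {ω | ε * t < |V ω|} = {ω | ε ^ 2 * t < V ω ^ 2 / t} := by
  ext ω
  rw [Set.mem_ofPred_eq, Set.mem_ofPred_eq, lt_div_iff₀ ht,
    ← sq_lt_sq₀ (by positivity) (abs_nonneg _), sq_abs, mul_pow, sq t, mul_assoc]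

lemma tendsto_sq_nhdsGT_zero : Tendsto (fun ε : ℝ => ε ^ 2) (𝓝[>] 0) (𝓝[>] 0) := by
  refine tendsto_nhdsWithin_iff.2 ⟨?_, ?_⟩
  · simpa using (continuous_pow (M := ℝ) 2).tendsto 0 |>.mono_left nhdsWithin_le_nhds
  · filter_upwards [self_mem_nhdsWithin] with ε hε using pow_pos (Set.mem_Ioi.1 hε) 2

theorem tendsto_sq_mul_tsum_measureReal_lt_abs {Ω Ω' : Type*} {mΩ : MeasurableSpace Ω}
    {mΩ' : MeasurableSpace Ω'} {μ : Measure Ω} {μ' : Measure Ω'} [IsProbabilityMeasure μ]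
    [IsProbabilityMeasure μ'] {V : ℕ → Ω → ℝ} {Z : Ω' → ℝ}
    (hV : MeasureTheory.TendstoInDistribution (fun n ω => V n ω / √n) atTop Z (fun _ => μ) μ')
    (hZ : MemLp Z 2 μ') (hint : ∀ n, Integrable (fun ω => V n ω ^ 4) μ) {K : ℝ}
    (hK : ∀ n : ℕ, ∫ ω, V n ω ^ 4 ∂μ ≤ K * (n : ℝ) ^ 2) :
    Tendsto (fun ε : ℝ => ε ^ 2 * ∑' n : ℕ, μ.real {ω | ε * ((n : ℝ) + 1) < |V (n + 1) ω|})
      (𝓝[>] 0) (𝓝 (∫ ω, Z ω ^ 2 ∂μ')) := by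
  let W (n : ℕ) (ω : Ω) : ℝ := V n ω ^ 2 / n
  have hW : MeasureTheory.TendstoInDistribution W atTop (fun ω => Z ω ^ 2) (fun _ => μ) μ' := by
    simpa [W, div_pow, Function.comp_def] using hV.continuous_comp (continuous_pow 2)
  have hW_sq (n : ℕ) : (fun ω => W n ω ^ 2) = fun ω => V n ω ^ 4 / (n : ℝ) ^ 2 := by
    ext ω
    rw [div_pow, ← pow_mul]
  have hK_nonneg : 0 ≤ K := by
    simpa using (integral_nonneg fun ω => by positivity).trans (hK 1)
  have hmoment (n : ℕ) : ∫ ω, W n ω ^ 2 ∂μ ≤ K := by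
    rw [hW_sq, integral_div]
    exact div_le_of_le_mul₀ (sq_nonneg _) hK_nonneg (hK n)
  have hlim := tendsto_mul_tsum_measureReal_lt hW hZ.integrable_sq
    (.of_forall fun ω => sq_nonneg (Z ω)) (integrable_inv_one_add_sq.const_mul (1 + K)).integrableOn
    fun n x hx => measureReal_lt_le_of_integral_sq_le
      (by simpa only [hW_sq] using (hint n).div_const _) (hmoment n) hx
  refine (hlim.comp tendsto_sq_nhdsGT_zero).congr' ?_
  filter_upwards [self_mem_nhdsWithin] with ε hε
  refine congrArg (ε ^ 2 * ·) (tsum_congr fun n => ?_)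
  rw [setOf_mul_lt_abs_eq _ (le_of_lt hε) n.cast_add_one_pos]
  simp only [W, Nat.cast_succ]

end HsuRobbins

theorem stmt_12 {Ω : Type*} [MeasureSpace Ω] [IsProbabilityMeasure (ℙ : Measure Ω)]
    (q : ℕ) (hq : 2 ≤ q) (H : ℝ) (hH0 : 0 < H) (hH1 : H < 1 - 1 / (2 * q))
    (B : ℝ → Ω → ℝ) (hB : IsFractionalBrownianMotion B H)
    (c₁ : ℝ) (hc₁ : 0 < c₁)
    (hconv : TendstoInDistribution
      (fun n ω => hermiteVariation B H q n ω / (c₁ * Real.sqrt n)) (gaussianReal 0 1)) :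
    Tendsto
      (fun ε : ℝ =>
        ε ^ 2 *
          ∑' n : ℕ,
            (ℙ {ω | ε * ((n : ℝ) + 1) < |hermiteVariation B H q (n + 1) ω|}).toReal)
      (𝓝[>] 0) (𝓝 (c₁ ^ 2)) := by
  obtain ⟨K, hK⟩ := hB.exists_integral_hermiteVariation_pow_four_le (by omega) hH0.ne' hH1
  have hlaw := (hconv.tendstoInDistribution_id fun n =>
    ((hB.measurable_hermiteVariation q n).div_const _).aemeasurable).continuous_comp
      (continuous_const_mul c₁)
  have hclt : MeasureTheory.TendstoInDistribution (fun n ω => hermiteVariation B H q n ω / √n)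
      atTop (c₁ * ·) (fun _ => ℙ) (gaussianReal 0 1) := by
    simpa [Function.comp_def, ← mul_div_assoc, mul_div_mul_left, hc₁.ne'] using hlaw
  have hL2 : MemLp (c₁ * ·) 2 (gaussianReal 0 1) := (memLp_id_gaussianReal 2).const_mul c₁
  have hvar : ∫ x, (c₁ * x) ^ 2 ∂gaussianReal 0 1 = c₁ ^ 2 := by
    simp only [mul_pow]
    rw [integral_const_mul, integral_sq_gaussianReal, NNReal.coe_one, mul_one]
  rw [← hvar]
  exact tendsto_sq_mul_tsum_measureReal_lt_abs hclt hL2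
    (hB.integrable_hermiteVariation_pow_four q) hK
end

section
/- Let H ∈ (0,1) and let (B_t)_{t≥0} be a fractional Brownian motion with Hurst parameter H. Then (1/(−log ε)) · Σ_{n≥1} (1/n) · P(|B_n| > ε n^{2H}) converges to 1/H as ε → 0⁺. -/
open MeasureTheory ProbabilityTheory Filter Real Topology

/-!
If `X_n / n ^ a` has law `ν` for every `n ≥ 1`, then `ε n ^ b < |X_n|` has the probability that
`n < (|Z| / ε) ^ (1 / (b - a))`, where `Z` has law `ν`. By Tonelli, `∑ n⁻¹ P(ε n ^ b < |X_n|)` is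
therefore the expectation of the harmonic sum over the integers below `(|Z| / ε) ^ (1 / (b - a))`.
This sum is within `1` of `log⁺ (|Z| / ε) / (b - a)`, so after division by `-log ε` it converges to
`1 / (b - a)` wherever `Z ≠ 0`, and is dominated by an affine function of `log⁺ |Z|`.
-/

lemma integral_sum_range_eq_tsum {α : Type*} [MeasurableSpace α] {μ : Measure α}
    [IsFiniteMeasure μ] {c : ℕ → ℝ} (hc : ∀ n, 0 ≤ c n) {N : α → ℕ} (hN : Measurable N) :
    ∫ x, ∑ n ∈ Finset.range (N x), c n ∂μ = ∑' n, c n * μ.real {x | n < N x} := by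
  have measurableSet_lt_N (n : ℕ) : MeasurableSet {x | n < N x} :=
    measurableSet_lt measurable_const hN
  have ofReal_sum (x : α) : ENNReal.ofReal (∑ n ∈ Finset.range (N x), c n) =
      ∑' n, {y | n < N y}.indicator (fun _ ↦ ENNReal.ofReal (c n)) x := by
    rw [ENNReal.ofReal_sum_of_nonneg fun n _ ↦ hc n, sum_eq_tsum_indicator]
    simp [Set.indicator_apply]
  have measurable_sum : Measurable fun x ↦ ∑ n ∈ Finset.range (N x), c n :=
    (measurable_of_countable fun k ↦ ∑ n ∈ Finset.range k, c n).comp hN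
  rw [integral_eq_lintegral_of_nonneg_ae (.of_forall fun x ↦ Finset.sum_nonneg fun n _ ↦ hc n)
    measurable_sum.aestronglyMeasurable]
  simp_rw [ofReal_sum]
  rw [lintegral_tsum fun n ↦ (measurable_const.indicator (measurableSet_lt_N n)).aemeasurable]
  simp_rw [lintegral_indicator_const (measurableSet_lt_N _)]
  rw [ENNReal.tsum_toReal_eq fun n ↦ ENNReal.mul_ne_top ENNReal.ofReal_ne_top (measure_ne_top _ _)]
  simp [Measure.real, hc]

lemma posLog_rpow {y s : ℝ} (hy : 0 ≤ y) (hs : 0 ≤ s) : log⁺ (y ^ s) = s * log⁺ y := by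
  rcases hy.eq_or_lt with rfl | hy
  · rcases hs.eq_or_lt with rfl | hs
    · simp
    · simp [zero_rpow hs.ne']
  · rw [posLog_apply, posLog_apply, log_rpow hy, mul_max_of_nonneg _ _ hs, mul_zero]

lemma integrable_posLog_of_integrable_id {ν : Measure ℝ} (hν : Integrable id ν) :
    Integrable log⁺ ν := by
  refine hν.mono continuous_posLog.aestronglyMeasurable (.of_forall fun x ↦ ?_)
  rw [norm_of_nonneg posLog_nonneg, ← posLog_abs]
  exact max_le (norm_nonneg x) (log_le_self (abs_nonneg x))

/-- The sum of `1 / k` over the integers `1 ≤ k < y`. For `y ≤ 1` the truncated subtraction gives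
the empty sum. -/
noncomputable def harmonicBelow (y : ℝ) : ℝ :=
  (harmonic (⌈y⌉₊ - 1) : ℝ)

lemma harmonicBelow_eq_sum (y : ℝ) :
    harmonicBelow y = ∑ n ∈ Finset.range (⌈y⌉₊ - 1), 1 / ((n : ℝ) + 1) := by
  simp [harmonicBelow, harmonic]

lemma measurable_harmonicBelow : Measurable harmonicBelow :=
  (measurable_of_countable fun n : ℕ ↦ ((harmonic (n - 1) : ℚ) : ℝ)).comp Nat.measurable_ceil

lemma harmonicBelow_nonneg (y : ℝ) : 0 ≤ harmonicBelow y := by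
  rw [harmonicBelow_eq_sum]
  positivity

lemma posLog_le_harmonicBelow {y : ℝ} (hy : 0 ≤ y) : log⁺ y ≤ harmonicBelow y := by
  rcases le_total y 1 with hy1 | hy1
  · rw [(posLog_eq_zero_iff y).2 (abs_le.2 ⟨by linarith, hy1⟩)]
    exact harmonicBelow_nonneg y
  have ceil_pos : 0 < ⌈y⌉₊ := Nat.ceil_pos.2 (by linarith)
  calc log⁺ y = log y := posLog_eq_log (by rwa [abs_of_nonneg hy])
    _ ≤ log ((⌈y⌉₊ - 1 + 1 : ℕ) : ℝ) := by
      rw [Nat.sub_add_cancel ceil_pos]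
      exact log_le_log (by linarith) (Nat.le_ceil y)
    _ ≤ harmonicBelow y := log_add_one_le_harmonic _

lemma harmonicBelow_le_one_add_posLog {y : ℝ} (hy : 0 ≤ y) : harmonicBelow y ≤ 1 + log⁺ y := by
  have cast_le : ((⌈y⌉₊ - 1 : ℕ) : ℝ) ≤ y := by
    rcases Nat.eq_zero_or_pos ⌈y⌉₊ with h | h
    · simpa [h] using hy
    · rw [Nat.cast_pred h]
      linarith [Nat.ceil_lt_add_one hy]
  calc harmonicBelow y ≤ 1 + log ((⌈y⌉₊ - 1 : ℕ) : ℝ) := harmonic_le_one_add_log _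
    _ ≤ 1 + log⁺ ((⌈y⌉₊ - 1 : ℕ) : ℝ) := by rw [log_of_nat_eq_posLog]
    _ ≤ 1 + log⁺ y := by gcongr

lemma tendsto_harmonicBelow_div_log :
    Tendsto (fun y ↦ harmonicBelow y / log y) atTop (𝓝 1) := by
  have upper : Tendsto (fun y ↦ (log y)⁻¹ + 1) atTop (𝓝 1) := by
    simpa using (tendsto_inv_atTop_zero.comp tendsto_log_atTop).add_const 1
  refine tendsto_of_tendsto_of_tendsto_of_le_of_le' tendsto_const_nhds upper ?_ ?_ <;>
    filter_upwards [eventually_gt_atTop 1] with y hy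
  all_goals
    have log_pos_y : 0 < log y := log_pos hy
    have posLog_y : log⁺ y = log y := posLog_eq_log (hy.le.trans (le_abs_self y))
  · rw [one_le_div log_pos_y, ← posLog_y]
    exact posLog_le_harmonicBelow (by linarith)
  · rw [div_le_iff₀ log_pos_y, add_mul, inv_mul_cancel₀ log_pos_y.ne', one_mul, ← posLog_y]
    exact harmonicBelow_le_one_add_posLog (by linarith)

lemma tendsto_neg_log_nhdsGT_zero : Tendsto (fun ε ↦ -log ε) (𝓝[>] 0) atTop :=
  tendsto_neg_atBot_atTop.comp tendsto_log_nhdsGT_zero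

lemma tendsto_harmonicBelow_rpow_div_neg_log {z s : ℝ} (hz : 0 < z) (hs : 0 < s) :
    Tendsto (fun ε ↦ harmonicBelow ((z / ε) ^ s) / -log ε) (𝓝[>] 0) (𝓝 s) := by
  have rpow_atTop : Tendsto (fun ε ↦ (z / ε) ^ s) (𝓝[>] 0) atTop :=
    (tendsto_rpow_atTop hs).comp (tendsto_inv_nhdsGT_zero.const_mul_atTop hz)
  have log_ratio : Tendsto (fun ε ↦ log ((z / ε) ^ s) / -log ε) (𝓝[>] 0) (𝓝 s) := by
    have limit : Tendsto (fun ε ↦ s * (log z / -log ε + 1)) (𝓝[>] 0) (𝓝 s) := by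
      simpa using ((tendsto_neg_log_nhdsGT_zero.const_div_atTop (log z)).add_const 1).const_mul s
    refine limit.congr' ?_
    filter_upwards [self_mem_nhdsWithin, tendsto_neg_log_nhdsGT_zero.eventually_gt_atTop 0]
      with ε (hε : 0 < ε) neg_log_pos
    rw [log_rpow (by positivity), log_div hz.ne' hε.ne', mul_div_assoc, sub_eq_add_neg, add_div,
      div_self neg_log_pos.ne']
  have product := (tendsto_harmonicBelow_div_log.comp rpow_atTop).mul log_ratio
  rw [one_mul] at product
  refine product.congr' ?_
  filter_upwards [(tendsto_log_atTop.comp rpow_atTop).eventually_ne_atTop 0] with ε log_ne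
  exact div_mul_div_cancel₀ log_ne

lemma harmonicBelow_rpow_div_neg_log_le {z s ε : ℝ} (hz : 0 ≤ z) (hs : 0 ≤ s) (hε : 0 < ε)
    (hlog : 1 ≤ -log ε) :
    harmonicBelow ((z / ε) ^ s) / -log ε ≤ 1 + s * (log⁺ z + 1) := by
  have posLog_inv : log⁺ ε⁻¹ = -log ε := by
    rw [posLog_apply, log_inv, max_eq_right (by linarith)]
  have posLog_div : log⁺ (z / ε) ≤ log⁺ z + -log ε := by
    rw [div_eq_mul_inv, ← posLog_inv]
    exact posLog_mul
  rw [div_le_iff₀ (by linarith)]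
  calc harmonicBelow ((z / ε) ^ s) ≤ 1 + log⁺ ((z / ε) ^ s) :=
        harmonicBelow_le_one_add_posLog (by positivity)
    _ = 1 + s * log⁺ (z / ε) := by rw [posLog_rpow (by positivity) hs]
    _ ≤ 1 + s * (log⁺ z + -log ε) := by gcongr
    _ ≤ 1 * -log ε + s * (log⁺ z * -log ε + -log ε) := by
      gcongr
      · linarith
      · exact le_mul_of_one_le_right posLog_nonneg hlog
    _ = (1 + s * (log⁺ z + 1)) * -log ε := by ring

section Law

variable {ν : Measure ℝ} [IsFiniteMeasure ν]

lemma tsum_one_div_mul_measureReal_lt_abs {b ε : ℝ} (hb : 0 < b) (hε : 0 < ε) :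
    ∑' n : ℕ, 1 / ((n : ℝ) + 1) * ν.real {x | ε * ((n : ℝ) + 1) ^ b < |x|} =
      ∫ x, harmonicBelow ((|x| / ε) ^ b⁻¹) ∂ν := by
  have lt_iff (n : ℕ) (x : ℝ) :
      n < ⌈(|x| / ε) ^ b⁻¹⌉₊ - 1 ↔ ε * ((n : ℝ) + 1) ^ b < |x| := by
    rw [Nat.lt_sub_iff_add_lt, Nat.lt_ceil, Nat.cast_succ,
      lt_rpow_inv_iff_of_pos (by positivity) (by positivity) hb, lt_div_iff₀' hε]
  simp_rw [harmonicBelow_eq_sum, ← lt_iff]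
  exact (integral_sum_range_eq_tsum (fun n ↦ by positivity) (by fun_prop)).symm

theorem tendsto_tsum_measureReal_lt_abs (hν : Integrable log⁺ ν) {b : ℝ} (hb : 0 < b) :
    Tendsto
      (fun ε : ℝ ↦ 1 / -log ε *
        ∑' n : ℕ, 1 / ((n : ℝ) + 1) * ν.real {x | ε * ((n : ℝ) + 1) ^ b < |x|})
      (𝓝[>] 0) (𝓝 (ν.real {0}ᶜ / b)) := by
  have integral_limit : ∫ x, ({0}ᶜ : Set ℝ).indicator (fun _ ↦ b⁻¹) x ∂ν = ν.real {0}ᶜ / b := by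
    rw [integral_indicator_const _ (measurableSet_singleton 0).compl, smul_eq_mul, div_eq_mul_inv]
  have dominated : Tendsto (fun ε ↦ ∫ x, harmonicBelow ((|x| / ε) ^ b⁻¹) / -log ε ∂ν) (𝓝[>] 0)
      (𝓝 (ν.real {0}ᶜ / b)) := by
    rw [← integral_limit]
    refine tendsto_integral_filter_of_dominated_convergence
      (fun x ↦ 1 + b⁻¹ * (log⁺ x + 1)) (.of_forall fun ε ↦ ?_) ?_ ?_ (.of_forall fun x ↦ ?_)
    · exact ((measurable_harmonicBelow.comp (by fun_prop)).div_const _).aestronglyMeasurable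
    · filter_upwards [self_mem_nhdsWithin, tendsto_neg_log_nhdsGT_zero.eventually_ge_atTop 1]
        with ε (hε : 0 < ε) hlog
      refine .of_forall fun x ↦ ?_
      rw [norm_of_nonneg (div_nonneg (harmonicBelow_nonneg _) (by linarith)), ← posLog_abs x]
      exact harmonicBelow_rpow_div_neg_log_le (abs_nonneg x) (by positivity) hε hlog
    · exact (integrable_const 1).add ((hν.add (integrable_const 1)).const_mul b⁻¹)
    · rcases eq_or_ne x 0 with rfl | hx
      · simp [harmonicBelow, zero_rpow (inv_ne_zero hb.ne')]
      · simpa [hx] using tendsto_harmonicBelow_rpow_div_neg_log (abs_pos.2 hx) (inv_pos.2 hb)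
  refine dominated.congr' ?_
  filter_upwards [self_mem_nhdsWithin] with ε (hε : 0 < ε)
  rw [tsum_one_div_mul_measureReal_lt_abs hb hε, integral_div, one_div_mul_eq_div]

/-- Time is shifted by one: `X n` is the value of the process at time `n + 1`. -/
theorem stmt_14_general {Ω : Type*} [MeasurableSpace Ω] {P : Measure Ω} {X : ℕ → Ω → ℝ}
    {a b : ℝ} (hab : a < b) (hX : ∀ n : ℕ, HasLaw (fun ω ↦ X n ω / ((n : ℝ) + 1) ^ a) ν P)
    (hν : Integrable log⁺ ν) :
    Tendsto
      (fun ε : ℝ ↦ 1 / -log ε *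
        ∑' n : ℕ, 1 / ((n : ℝ) + 1) * P.real {ω | ε * ((n : ℝ) + 1) ^ b < |X n ω|})
      (𝓝[>] 0) (𝓝 (ν.real {0}ᶜ / (b - a))) := by
  have tail_eq (ε : ℝ) (n : ℕ) : P.real {ω | ε * ((n : ℝ) + 1) ^ b < |X n ω|} =
      ν.real {x | ε * ((n : ℝ) + 1) ^ (b - a) < |x|} := by
    have hn : (0 : ℝ) < (n : ℝ) + 1 := by positivity
    rw [← (hX n).measureReal_eq (measurableSet_lt measurable_const (by fun_prop))]
    simp_rw [abs_div, abs_of_pos (rpow_pos_of_pos hn a), rpow_sub hn, mul_div_assoc',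
      div_lt_div_iff_of_pos_right (rpow_pos_of_pos hn a)]
  simp_rw [tail_eq]
  exact tendsto_tsum_measureReal_lt_abs hν (sub_pos.2 hab)

end Law

lemma integrable_posLog_gaussianReal (m : ℝ) (v : NNReal) : Integrable log⁺ (gaussianReal m v) :=
  integrable_posLog_of_integrable_id (memLp_one_iff_integrable.1 (memLp_id_gaussianReal 1))

lemma gaussianReal_real_compl_singleton (m : ℝ) {v : NNReal} (hv : v ≠ 0) (x : ℝ) :
    (gaussianReal m v).real {x}ᶜ = 1 := by
  have := nullSingletonClass_gaussianReal (μ := m) hv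
  rw [probReal_compl_eq_one_sub (measurableSet_singleton x), Measure.real, measure_singleton,
    ENNReal.toReal_zero, sub_zero]

namespace IsFractionalBrownianMotion

variable {Ω : Type*} [MeasureSpace Ω] {H t : ℝ} {B : ℝ → Ω → ℝ}

lemma hasLaw_gaussianReal (hB : IsFractionalBrownianMotion B H) (hH : H ≠ 0) (ht : 0 ≤ t) :
    HasLaw (B t) (gaussianReal 0 (t ^ (2 * H)).toNNReal) ℙ := by
  obtain ⟨v, hv⟩ := hB.gaussian_fdd 1 (fun _ ↦ t) (fun _ ↦ ht) fun _ ↦ 1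
  have law : HasLaw (B t) (gaussianReal 0 v) ℙ :=
    ⟨(hB.measurable t).aemeasurable, by simpa using hv⟩
  have mean : ∫ ω, B t ω = 0 := law.integral_eq.trans integral_id_gaussianReal
  have variance : (v : ℝ) = t ^ (2 * H) := by
    calc (v : ℝ) = Var[B t; ℙ] := (law.variance_eq.trans variance_id_gaussianReal).symm
      _ = ∫ ω, B t ω * B t ω := by
        simp_rw [variance_of_integral_eq_zero law.aemeasurable mean, sq]
      _ = t ^ (2 * H) := by
        rw [hB.covariance t t ht ht, sub_self, abs_zero, zero_rpow (by simpa using hH)]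
        ring
  rwa [← variance, toNNReal_coe]

lemma hasLaw_div_rpow (hB : IsFractionalBrownianMotion B H) (hH : H ≠ 0) (ht : 0 < t) :
    HasLaw (fun ω ↦ B t ω / t ^ H) (gaussianReal 0 1) ℙ := by
  have variance_one : (t ^ (2 * H)).toNNReal / .mk ((t ^ H) ^ 2) (sq_nonneg _) = 1 := by
    have rpow_eq : t ^ (2 * H) = (t ^ H) ^ 2 := by
      rw [mul_comm, rpow_mul ht.le, rpow_two]
    rw [rpow_eq, toNNReal_of_nonneg (sq_nonneg _)]
    exact div_self (by simpa [← NNReal.coe_ne_zero] using (rpow_pos_of_pos ht H).ne')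
  simpa [variance_one] using gaussianReal_div_const (hB.hasLaw_gaussianReal hH ht.le) (t ^ H)

end IsFractionalBrownianMotion

theorem stmt_14 {Ω : Type*} [MeasureSpace Ω] [IsProbabilityMeasure (ℙ : Measure Ω)]
    (H : ℝ) (hH0 : 0 < H) (hH1 : H < 1)
    (B : ℝ → Ω → ℝ) (hB : IsFractionalBrownianMotion B H) :
    Tendsto
      (fun ε : ℝ =>
        (1 / (-Real.log ε)) *
          ∑' n : ℕ, (1 / ((n : ℝ) + 1)) *
            (ℙ {ω | ε * ((n : ℝ) + 1) ^ (2 * H) < |B ((n : ℝ) + 1) ω|}).toReal)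
      (𝓝[>] 0) (𝓝 (1 / H)) := by
  have spitzer := stmt_14_general (b := 2 * H) (by linarith)
    (fun n ↦ hB.hasLaw_div_rpow hH0.ne' n.cast_add_one_pos) (integrable_posLog_gaussianReal 0 1)
  rwa [gaussianReal_real_compl_singleton 0 one_ne_zero, show 2 * H - H = H by ring] at spitzer
end
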